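/- For every nonnegative integer n, the n-th elementary symmetric function evaluated at the sequence (1/1², 1/2², 1/3², …) equals π^{2n}/(2n+1)!; that is, ∑_{1 ≤ i₁ < i₂ < ⋯ < iₙ} 1/(i₁² i₂² ⋯ iₙ²) = π^{2n}/(2n+1)!. -/

import Mathlib

open Real

/-!
The elementary symmetric functions `eₙ` of an absolutely summable family `f` are the power series
coefficients of the entire function `z ↦ ∏ (1 + z fᵢ)`. For `fₖ = 1/k²` and `z = -t²`, Euler's
product says that this function is `sin (πt) / (πt)`, and since every complex `z` has the form
`-t²`, the coefficients can be read off from the Taylor series of the sine.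
-/

open Filter Topology

/-- Strictly monotone functions on a linear order are the same as order embeddings. This
identifies increasing `n`-tuples with the `Fin n ↪o ι` of `Set.powersetCard.ofFinEmbEquiv`. -/
@[simps]
def strictMonoEquivOrderEmbedding {α β : Type*} [LinearOrder α] [Preorder β] :
    {f : α → β // StrictMono f} ≃ (α ↪o β) where
  toFun f := .ofStrictMono f.1 f.2
  invFun e := ⟨e, e.strictMono⟩

section InfiniteEsymm

variable {ι R : Type*}

/-- The `n`-th elementary symmetric function of a possibly infinite family `f`, as the sum of
`∏ i ∈ s, f i` over the `n`-element sets of indices `s`. Following the convention of `tsum`, it is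
`0` if these products are not summable. -/
noncomputable def tsumEsymm [CommSemiring R] [TopologicalSpace R] (f : ι → R) (n : ℕ) : R :=
  ∑' s : Set.powersetCard ι n, ∏ i ∈ (s : Finset ι), f i

theorem tsum_strictMono_prod_eq_tsumEsymm [LinearOrder ι] [CommSemiring R] [TopologicalSpace R]
    (f : ι → R) (n : ℕ) :
    ∑' g : {g : Fin n → ι // StrictMono g}, ∏ k, f (g.1 k) = tsumEsymm f n := by
  rw [tsumEsymm, ← (strictMonoEquivOrderEmbedding.trans Set.powersetCard.ofFinEmbEquiv).tsum_eq]
  refine tsum_congr fun g => ?_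
  simp [Set.powersetCard.ofFinEmbEquiv_apply, Set.powersetCard.val_ofFinEmb]

theorem ofReal_tsumEsymm (𝕜 : Type*) [RCLike 𝕜] (f : ι → ℝ) (n : ℕ) :
    ((tsumEsymm f n : ℝ) : 𝕜) = tsumEsymm (fun i => (f i : 𝕜)) n := by
  simp only [tsumEsymm, RCLike.ofReal_tsum, RCLike.ofReal_prod]

section NormedRing

variable [NormedCommRing R] [NormOneClass R] [CompleteSpace R] {f : ι → R}

theorem hasSum_pow_mul_tsumEsymm (hf : Summable fun i => ‖f i‖) (z : R) :
    HasSum (fun n => z ^ n * tsumEsymm f n) (∏' i, (1 + z * f i)) := by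
  have summable_prod : Summable fun s : Finset ι => ∏ i ∈ s, f i :=
    summable_finsetProd_of_summable_norm hf
  have summable_prod_mul : Summable fun s : Finset ι => ∏ i ∈ s, z * f i :=
    summable_finsetProd_of_summable_norm <|
      (hf.mul_left ‖z‖).of_nonneg_of_le (fun _ => norm_nonneg _) fun _ => norm_mul_le _ _
  rw [tprod_one_add summable_prod_mul]
  refine (Set.powersetCard.prodEquiv.hasSum_iff.mpr summable_prod_mul.hasSum).sigma fun n => ?_
  have hasSum_prod : HasSum (fun s : Set.powersetCard ι n => ∏ i ∈ (s : Finset ι), f i)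
      (tsumEsymm f n) := (summable_prod.comp_injective Subtype.val_injective).hasSum
  simpa [Finset.prod_mul_distrib] using hasSum_prod.mul_left (z ^ n)

end NormedRing

end InfiniteEsymm

section NormedField

variable {𝕜 E ι : Type*} [NontriviallyNormedField 𝕜]

theorem eq_of_eventually_hasSum_pow_smul [NormedAddCommGroup E] [NormedSpace 𝕜 E]
    {a b : ℕ → E} {F : 𝕜 → E} (ha : ∀ᶠ z in 𝓝 0, HasSum (fun n => z ^ n • a n) (F z))
    (hb : ∀ᶠ z in 𝓝 0, HasSum (fun n => z ^ n • b n) (F z)) : a = b := by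
  let series (c : ℕ → E) : FormalMultilinearSeries 𝕜 𝕜 E := fun n =>
    ContinuousMultilinearMap.mkPiRing 𝕜 (Fin n) (c n)
  have coeff_series (c : ℕ → E) (n : ℕ) : (series c).coeff n = c n := by
    simp [series, FormalMultilinearSeries.coeff]
  have hasFPowerSeriesAt {c : ℕ → E} (hc : ∀ᶠ z in 𝓝 0, HasSum (fun n => z ^ n • c n) (F z)) :
      HasFPowerSeriesAt F (series c) 0 := by
    simpa only [hasFPowerSeriesAt_iff, coeff_series, zero_add] using hc
  have series_eq : series a = series b :=
    (hasFPowerSeriesAt ha).eq_formalMultilinearSeries (hasFPowerSeriesAt hb)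
  ext n
  rw [← coeff_series a, series_eq, coeff_series]

theorem tsumEsymm_eq_of_eventually_hasSum [CompleteSpace 𝕜] {f : ι → 𝕜} {c : ℕ → 𝕜}
    (hf : Summable fun i => ‖f i‖)
    (hc : ∀ᶠ z in 𝓝 0, HasSum (fun n => z ^ n * c n) (∏' i, (1 + z * f i))) :
    tsumEsymm f = c :=
  eq_of_eventually_hasSum_pow_smul (.of_forall (hasSum_pow_mul_tsumEsymm hf)) hc

end NormedField

theorem hasSum_sin_div_self {w : ℂ} (hw : w ≠ 0) :
    HasSum (fun n : ℕ => (-w ^ 2) ^ n / (Nat.factorial (2 * n + 1) : ℂ)) (Complex.sin w / w) := by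
  refine ((Complex.hasSum_sin w).div_const w).congr_fun fun n => ?_
  rw [neg_pow, ← pow_mul, pow_succ]
  field_simp

theorem mul_tprod_pnat_one_sub_sq_div_sq (t : ℂ) :
    π * t * ∏' k : ℕ+, (1 - t ^ 2 / (k : ℂ) ^ 2) = Complex.sin (π * t) := by
  have multipliable : Multipliable fun j : ℕ => 1 - t ^ 2 / ((j : ℂ) + 1) ^ 2 := by
    simpa only [neg_div, ← sub_eq_add_neg] using multipliable_sineTerm t
  rw [tprod_pnat_eq_tprod_succ (f := fun k : ℕ => 1 - t ^ 2 / (k : ℂ) ^ 2)]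
  push_cast
  exact tendsto_nhds_unique (multipliable.hasProd.tendsto_prod_nat.const_mul _)
    (Complex.tendsto_euler_sin_prod t)

theorem hasSum_zero_pow_mul {R : Type*} [Semiring R] [TopologicalSpace R] (c : ℕ → R) :
    HasSum (fun n => 0 ^ n * c n) (c 0) := by
  simpa using hasSum_single (f := fun n => 0 ^ n * c n) 0 fun n hn => by simp [hn]

theorem hasSum_tprod_pnat_one_add_mul_one_div_sq (z : ℂ) :
    HasSum (fun n : ℕ => z ^ n * (π ^ (2 * n) / (Nat.factorial (2 * n + 1) : ℂ)))
      (∏' k : ℕ+, (1 + z * (1 / (k : ℂ) ^ 2))) := by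
  obtain ⟨t, rfl⟩ : ∃ t, z = -t ^ 2 := by
    obtain ⟨t, ht⟩ := IsAlgClosed.exists_pow_nat_eq (-z) two_pos
    exact ⟨t, by rw [ht, neg_neg]⟩
  obtain rfl | ht := eq_or_ne t 0
  · simpa using hasSum_zero_pow_mul fun n => (π ^ (2 * n) / (Nat.factorial (2 * n + 1)) : ℂ)
  have pi_mul_ne_zero : (π * t : ℂ) ≠ 0 := mul_ne_zero (mod_cast pi_ne_zero) ht
  have tprod_eq : ∏' k : ℕ+, (1 + -t ^ 2 * (1 / (k : ℂ) ^ 2)) =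
      Complex.sin (π * t) / (π * t) := by
    rw [eq_div_iff pi_mul_ne_zero, mul_comm, ← mul_tprod_pnat_one_sub_sq_div_sq]
    simp only [mul_one_div, neg_div, sub_eq_add_neg]
  rw [tprod_eq]
  refine (hasSum_sin_div_self pi_mul_ne_zero).congr_fun fun n => ?_
  rw [pow_mul, mul_div_assoc', ← mul_pow]
  ring

theorem summable_norm_pnat_one_div_sq : Summable fun k : ℕ+ => ‖1 / (k : ℂ) ^ 2‖ := by
  simpa [Function.comp_def] using
    (Real.summable_one_div_nat_pow.mpr one_lt_two).comp_injective PNat.coe_injective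

theorem tsumEsymm_pnat_one_div_sq (n : ℕ) :
    tsumEsymm (fun k : ℕ+ => 1 / (k : ℂ) ^ 2) n =
      π ^ (2 * n) / (Nat.factorial (2 * n + 1) : ℂ) :=
  congrFun (tsumEsymm_eq_of_eventually_hasSum summable_norm_pnat_one_div_sq
    (.of_forall hasSum_tprod_pnat_one_add_mul_one_div_sq)) n

/-- The `n`-th elementary symmetric function of `(1/1², 1/2², …)`, as a sum over
strictly increasing `n`-tuples of positive integers. -/
theorem esymm_inv_squares (n : ℕ) :
    (∑' f : {f : Fin n → ℕ+ // StrictMono f}, ∏ k : Fin n, (1 : ℝ) / ((f.1 k : ℕ) : ℝ) ^ 2)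
      = π ^ (2 * n) / (Nat.factorial (2 * n + 1) : ℝ) := by
  rw [tsum_strictMono_prod_eq_tsumEsymm fun k : ℕ+ => 1 / (k : ℝ) ^ 2]
  apply Complex.ofReal_injective
  refine (ofReal_tsumEsymm ℂ _ n).trans ?_
  push_cast
  exact tsumEsymm_pnat_one_div_sq n
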